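/- Let φ_{μ,σ}(x) = (1/(σ√(2π))) · exp(−(x − μ)²/(2σ²)) denote the normal density with mean μ and standard deviation σ. For 0 ≤ μ < 1, set σ = √(1 − μ²). Then for all a ≥ 0, ∫_{−a}^{a} (1 − x²) φ_{μ,σ}(x) dx = (μ√(1−μ²)/√(2π)) · (exp(−(a−μ)²/(2−2μ²)) − exp(−(a+μ)²/(2−2μ²))) + (a√(1−μ²)/√(2π)) · (exp(−(a−μ)²/(2−2μ²)) + exp(−(a+μ)²/(2−2μ²))). -/

import Mathlib

/-- The density of the normal distribution with mean `μ` and standard deviation `σ`. -/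
noncomputable def normalPDF (μ σ x : ℝ) : ℝ :=
  (1 / (σ * Real.sqrt (2 * Real.pi))) * Real.exp (-(x - μ)^2 / (2 * σ^2))

/-!
The normal density satisfies `φ' = -(x - μ) / σ² * φ`. Since `(x + μ) * (x - μ) = x² - μ²`, the
product rule shows that `σ² (x + μ) φ` is an antiderivative of `(μ² + σ² - x²) φ`. The payoff
integrand is the case of total error `μ² + σ² = 1`.
-/

theorem hasDerivAt_normalPDF (μ σ x : ℝ) :
    HasDerivAt (normalPDF μ σ) (-(x - μ) / σ ^ 2 * normalPDF μ σ x) x := by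
  have hexponent : HasDerivAt (fun y : ℝ ↦ -(y - μ) ^ 2 / (2 * σ ^ 2)) (-(x - μ) / σ ^ 2) x :=
    ((((hasDerivAt_id' x).sub_const μ).fun_pow 2).fun_neg.div_const (2 * σ ^ 2)).congr_deriv
      (by ring)
  exact (hexponent.exp.const_mul (1 / (σ * √(2 * Real.pi)))).congr_deriv
    (by rw [normalPDF]; ring)

@[fun_prop]
theorem continuous_normalPDF (μ σ : ℝ) : Continuous (normalPDF μ σ) :=
  continuous_iff_continuousAt.2 fun x ↦ (hasDerivAt_normalPDF μ σ x).continuousAt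

theorem normalPDF_neg (μ σ x : ℝ) : normalPDF μ σ (-x) = normalPDF (-μ) σ x := by
  rw [normalPDF, normalPDF, ← neg_sq, neg_sub', neg_neg]

theorem sq_mul_normalPDF (μ σ x : ℝ) :
    σ ^ 2 * normalPDF μ σ x
      = σ / √(2 * Real.pi) * Real.exp (-(x - μ) ^ 2 / (2 * σ ^ 2)) := by
  rcases eq_or_ne σ 0 with rfl | hσ
  · simp
  · rw [normalPDF]
    field_simp

theorem hasDerivAt_sq_mul_add_mul_normalPDF {σ : ℝ} (hσ : σ ≠ 0) (μ x : ℝ) :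
    HasDerivAt (fun y ↦ σ ^ 2 * ((y + μ) * normalPDF μ σ y))
      ((μ ^ 2 + σ ^ 2 - x ^ 2) * normalPDF μ σ x) x := by
  have hproduct := ((hasDerivAt_id' x).add_const μ).fun_mul (hasDerivAt_normalPDF μ σ x)
  refine (hproduct.const_mul (σ ^ 2)).congr_deriv ?_
  field_simp
  ring

theorem integral_sq_add_sq_sub_sq_mul_normalPDF {σ : ℝ} (hσ : σ ≠ 0) (μ a b : ℝ) :
    ∫ x in a..b, (μ ^ 2 + σ ^ 2 - x ^ 2) * normalPDF μ σ x
      = σ ^ 2 * ((b + μ) * normalPDF μ σ b) - σ ^ 2 * ((a + μ) * normalPDF μ σ a) := by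
  have hcont : Continuous fun x ↦ (μ ^ 2 + σ ^ 2 - x ^ 2) * normalPDF μ σ x := by fun_prop
  exact intervalIntegral.integral_eq_sub_of_hasDerivAt
    (fun x _ ↦ hasDerivAt_sq_mul_add_mul_normalPDF hσ μ x) (hcont.intervalIntegrable a b)

theorem ex_post_utility_closed_form_general {σ : ℝ} (hσ : σ ≠ 0) (μ a : ℝ) :
    ∫ x in (-a)..a, (μ ^ 2 + σ ^ 2 - x ^ 2) * normalPDF μ σ x
      = (μ * σ / √(2 * Real.pi))
          * (Real.exp (-(a - μ) ^ 2 / (2 * σ ^ 2)) - Real.exp (-(a + μ) ^ 2 / (2 * σ ^ 2)))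
        + (a * σ / √(2 * Real.pi))
          * (Real.exp (-(a - μ) ^ 2 / (2 * σ ^ 2)) + Real.exp (-(a + μ) ^ 2 / (2 * σ ^ 2))) := by
  have hright := sq_mul_normalPDF μ σ a
  have hleft := sq_mul_normalPDF (-μ) σ a
  rw [sub_neg_eq_add] at hleft
  rw [integral_sq_add_sq_sub_sq_mul_normalPDF hσ, normalPDF_neg]
  linear_combination (a + μ) * hright + (a - μ) * hleft

theorem ex_post_utility_closed_form (μ a : ℝ) (hμ0 : 0 ≤ μ) (hμ1 : μ < 1) (ha : 0 ≤ a) :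
    ∫ x in (-a)..a, (1 - x^2) * normalPDF μ (Real.sqrt (1 - μ^2)) x
      = (μ * Real.sqrt (1 - μ^2) / Real.sqrt (2 * Real.pi))
          * (Real.exp (-(a - μ)^2 / (2 - 2*μ^2)) - Real.exp (-(a + μ)^2 / (2 - 2*μ^2)))
        + (a * Real.sqrt (1 - μ^2) / Real.sqrt (2 * Real.pi))
          * (Real.exp (-(a - μ)^2 / (2 - 2*μ^2)) + Real.exp (-(a + μ)^2 / (2 - 2*μ^2))) := by
  have hσ : 0 < 1 - μ ^ 2 := sub_pos.2 (pow_lt_one₀ hμ0 hμ1 two_ne_zero)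
  simpa only [Real.sq_sqrt hσ.le, add_sub_cancel, mul_sub, mul_one]
    using ex_post_utility_closed_form_general (Real.sqrt_pos.2 hσ).ne' μ a
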